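/- Let C be the dual-pivot quickselect cost array defined from the 'Count' partitioning costs P^ct by the standard recurrence. Then for every n ≥ 4, the average number of comparisons to select the second smallest element satisfies C(n,2) = C(n,n−1) = (9/4)·n + (1/12)·∑_{k=1}^{n−1} H_k/(n−k) − (1/6)·∑_{k=2}^n H^alt_{k−1}/k − (8/9)·H_n − (1/9)·H^alt_n − 755/216 − (1/12)·∑_{k=1}^{n−1} 1/(k(n−k)) + (1/6)·H^alt_{n−1}/n − ( 1/(144(n−3)) if n is even ) − ( 1/(144(n−2)) if n is odd ) + ( 5/(144(n−1)) if n is even ) + ( 7/(3n) if n is even ) + ( 325/(144·n) if n is odd ). -/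

import Mathlib

open Finset

/-- Harmonic numbers `H_n = ∑_{k=1}^n 1/k`. -/
noncomputable def H (n : ℕ) : ℝ := ∑ k ∈ Finset.Icc 1 n, (1 : ℝ) / k

/-- Alternating harmonic numbers `H^alt_n = ∑_{k=1}^n (-1)^k/k`. -/
noncomputable def Halt (n : ℕ) : ℝ := ∑ k ∈ Finset.Icc 1 n, (-1 : ℝ) ^ k / k

/-- The dual-pivot quickselect cost array defined from expected partitioning
costs `P` by the standard recurrence:  `C(n,j) = 0` whenever `n ≤ 1` or `j < 1`
or `j > n`; and for `n ≥ 2` and `1 ≤ j ≤ n`,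
`C(n,j) = P(n) + (2/(n(n−1)))·( ∑_{s=j}^{n−2} (n−1−s)·C(s,j)
  + ∑_{m=1}^{n−2} ∑_{s=max(0,j−m−1)}^{min(j−2, n−m−2)} C(m, j−s−1)
  + ∑_{ℓ=n−j+1}^{n−2} (n−1−ℓ)·C(ℓ, n−j+1) )`.
(The `attach` is only needed for the termination proof.) -/
noncomputable def qsCost (P : ℕ → ℝ) : ℕ → ℤ → ℝ
  | n, j =>
    if n ≤ 1 ∨ j < 1 ∨ (n : ℤ) < j then 0
    else
      P n + 2 / ((n : ℝ) * ((n : ℝ) - 1)) *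
        ((∑ s ∈ (Finset.Icc j.toNat (n - 2)).attach,
            ((n : ℝ) - 1 - (s : ℕ)) * qsCost P (s : ℕ) j) +
         (∑ m ∈ (Finset.Icc 1 (n - 2)).attach,
            ∑ s ∈ Finset.Icc (max 0 (j - ((m : ℕ) : ℤ) - 1))
                (min (j - 2) ((n : ℤ) - ((m : ℕ) : ℤ) - 2)),
              qsCost P (m : ℕ) (j - s - 1)) +
         (∑ l ∈ (Finset.Icc ((n : ℤ) - j + 1).toNat (n - 2)).attach,
            ((n : ℝ) - 1 - (l : ℕ)) * qsCost P (l : ℕ) ((n : ℤ) - j + 1)))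
  termination_by n j => n
  decreasing_by
    · have hs := s.2; simp only [Finset.mem_Icc] at hs; omega
    · have hm := m.2; simp only [Finset.mem_Icc] at hm; omega
    · have hl := l.2; simp only [Finset.mem_Icc] at hl; omega

/-- Generating function of the expected partitioning costs of the strategy
"Count". -/
noncomputable def countGF (z : ℝ) : ℝ :=
  3 / (2 * (1 - z) ^ 2) + (Real.log ((1 + z) / (1 - z)) / 2) / (2 * (1 - z))
  - 31 * z ^ 2 / (8 * (1 - z)) - ((3 + z) / 8) * (Real.log ((1 + z) / (1 - z)) / 2)
  - 3 / 2 - 25 * z / 8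

open scoped Topology

/-! The cost `C(n, 1)` involves only itself and `C(n, 2)` only itself and `C(n, 1)`; by the symmetry
`C(n, j) = C(n, n + 1 - j)` the second largest element is covered as well. In both cases the second
difference of `n(n-1)/2 · C(n, j)` kills the weights `n - 1 - s` of the recurrence and leaves a
linear recurrence of order two, so that it suffices to check the closed form against this
recurrence and at two initial values. The partitioning costs themselves are read off the generating
function, where dividing by `1 - z` amounts to taking partial sums. -/

/-! ### Power series -/

theorem eq_of_eventually_hasSum_mul_pow {𝕜 : Type*} [NontriviallyNormedField 𝕜] {a b : ℕ → 𝕜}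
    {f : 𝕜 → 𝕜} (ha : ∀ᶠ z in 𝓝 0, HasSum (fun n ↦ a n * z ^ n) (f z))
    (hb : ∀ᶠ z in 𝓝 0, HasSum (fun n ↦ b n * z ^ n) (f z)) : a = b := by
  have hasFPowerSeriesAt {c : ℕ → 𝕜} (hc : ∀ᶠ z in 𝓝 0, HasSum (fun n ↦ c n * z ^ n) (f z)) :
      HasFPowerSeriesAt f (FormalMultilinearSeries.ofScalars 𝕜 c) 0 := by
    simpa [hasFPowerSeriesAt_iff, FormalMultilinearSeries.coeff_ofScalars, mul_comm] using hc
  have h := (hasFPowerSeriesAt ha).eq_formalMultilinearSeries (hasFPowerSeriesAt hb)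
  funext n
  simpa only [FormalMultilinearSeries.coeff_ofScalars] using congrArg (fun p ↦ p.coeff n) h

theorem hasSum_sum_range_mul_pow {𝕜 : Type*} [RCLike 𝕜] {a : ℕ → 𝕜} {s z : 𝕜}
    (ha : HasSum (fun n ↦ a n * z ^ n) s) (hz : ‖z‖ < 1) :
    HasSum (fun n ↦ (∑ k ∈ range (n + 1), a k) * z ^ n) (s / (1 - z)) := by
  have ha_norm : Summable fun n ↦ ‖a n * z ^ n‖ := summable_norm_iff.2 ha.summable
  have cauchy_product := hasSum_sum_range_mul_of_summable_norm ha_norm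
    (summable_norm_geometric_of_norm_lt_one hz)
  rw [ha.tsum_eq, tsum_geometric_of_norm_lt_one hz, ← div_eq_mul_inv] at cauchy_product
  convert! cauchy_product using 2 with n
  rw [sum_mul]
  refine sum_congr rfl fun k hk ↦ ?_
  rw [mul_assoc, ← pow_add, Nat.add_sub_cancel' (mem_range_succ_iff.1 hk)]

theorem hasSum_shift_mul_pow {𝕜 : Type*} [NormedField 𝕜] {a : ℕ → 𝕜} {s z : 𝕜}
    (ha : HasSum (fun n ↦ a n * z ^ n) s) (h0 : a 0 = 0) :
    HasSum (fun n ↦ a (n - 1) * z ^ n) (z * s) := by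
  rw [← hasSum_nat_add_iff' 1]
  simpa [h0, pow_succ', mul_left_comm] using ha.mul_left z

/-! ### Harmonic numbers -/

theorem H_zero : H 0 = 0 := by simp [H]

theorem H_succ (n : ℕ) : H (n + 1) = H n + 1 / (n + 1) := by
  simp [H, sum_Icc_succ_top]

theorem Halt_succ (n : ℕ) : Halt (n + 1) = Halt n + (-1) ^ (n + 1) / (n + 1) := by
  simp [Halt, sum_Icc_succ_top]

theorem sum_Icc_eq_sum_range {M : Type*} [AddCommMonoid M] {f : ℕ → M} {a : ℕ}
    (hf : ∀ k < a, f k = 0) (N : ℕ) : ∑ k ∈ Icc a N, f k = ∑ k ∈ range (N + 1), f k := by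
  refine sum_subset (fun k ↦ by simp) fun k _ hk ↦ hf k ?_
  grind

theorem sum_one_div_sub_eq_H (n : ℕ) : ∑ k ∈ Icc 1 (n - 1), 1 / ((n : ℝ) - k) = H (n - 1) := by
  refine sum_nbij' (n - ·) (n - ·) ?_ ?_ ?_ ?_ fun k hk ↦ ?_
  iterate 4 simp only [mem_Icc]; omega
  rw [Nat.cast_sub (by grind)]

theorem sum_one_div_mul_sub (n : ℕ) :
    ∑ k ∈ Icc 1 (n - 1), 1 / ((k : ℝ) * ((n : ℝ) - k)) = 2 * H (n - 1) / n := by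
  calc ∑ k ∈ Icc 1 (n - 1), 1 / ((k : ℝ) * ((n : ℝ) - k))
      = ∑ k ∈ Icc 1 (n - 1), (1 / (k : ℝ) + 1 / ((n : ℝ) - k)) / n := by
        refine sum_congr rfl fun k hk ↦ ?_
        obtain ⟨hk1, hkn⟩ := mem_Icc.1 hk
        have : (0 : ℝ) < k := by exact_mod_cast hk1
        have : (k : ℝ) < n := by exact_mod_cast (by omega : k < n)
        have : (n : ℝ) ≠ 0 := by linarith
        have : (n : ℝ) - k ≠ 0 := by linarith
        field_simp
        ring
    _ = 2 * H (n - 1) / n := by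
        rw [← sum_div, sum_add_distrib, sum_one_div_sub_eq_H, ← H, two_mul]

/-- The convolution `∑_{k=1}^{n-1} H_k/(n-k)` of the harmonic numbers with the reciprocals. -/
noncomputable def harmonicConv (n : ℕ) : ℝ := ∑ k ∈ Icc 1 (n - 1), H k / ((n : ℝ) - k)

theorem harmonicConv_succ (n : ℕ) :
    harmonicConv (n + 1) = harmonicConv n + 2 * H n / (n + 1) := by
  have reindex : ∑ k ∈ Icc 1 n, H (k - 1) / ((n + 1 : ℝ) - k) = harmonicConv n := by
    rw [harmonicConv]
    cases n with
    | zero => simp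
    | succ n =>
      rw [sum_Icc_eq_sum_range (by simp [H_zero]), sum_range_succ',
        sum_Icc_eq_sum_range (by simp [H_zero])]
      simp [H_zero]
  have split_H : ∀ k ∈ Icc 1 n, H k / ((n + 1 : ℝ) - k)
      = H (k - 1) / ((n + 1 : ℝ) - k) + 1 / ((k : ℝ) * ((n + 1 : ℝ) - k)) := by
    intro k hk
    obtain ⟨m, rfl⟩ := Nat.exists_eq_add_of_le' (mem_Icc.1 hk).1
    rw [H_succ, add_div, div_div]
    simp
  have one_div_sum := sum_one_div_mul_sub (n + 1)
  rw [Nat.add_sub_cancel, Nat.cast_add_one] at one_div_sum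
  rw [harmonicConv, Nat.add_sub_cancel, Nat.cast_add_one, sum_congr rfl split_H, sum_add_distrib,
    reindex, one_div_sum]

/-- The double sum `∑_{k=2}^n H^alt_{k-1}/k`. -/
noncomputable def alternatingDoubleSum (n : ℕ) : ℝ := ∑ k ∈ Icc 2 n, Halt (k - 1) / (k : ℝ)

theorem alternatingDoubleSum_succ (n : ℕ) :
    alternatingDoubleSum (n + 1) = alternatingDoubleSum n + Halt n / (n + 1) := by
  cases n with
  | zero => simp [alternatingDoubleSum, Halt]
  | succ n => simp [alternatingDoubleSum, sum_Icc_succ_top (show 2 ≤ n + 1 + 1 by omega)]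

/-! ### Partitioning costs of "Count" -/

/-- The coefficient of `z ^ n` in `artanh z`; division by zero gives the correct value at `n = 0`.
-/
noncomputable def artanhCoeff (n : ℕ) : ℝ := (1 - (-1) ^ n) / (2 * n)

theorem hasSum_artanhCoeff {z : ℝ} (hz : |z| < 1) :
    HasSum (fun n ↦ artanhCoeff n * z ^ n) (Real.log ((1 + z) / (1 - z)) / 2) := by
  obtain ⟨hz₁, hz₂⟩ := abs_lt.1 hz
  have h := ((Real.hasSum_pow_div_log_of_abs_lt_one hz).sub
    (Real.hasSum_pow_div_log_of_abs_lt_one (x := -z) (by rwa [abs_neg]))).div_const 2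
  rw [← hasSum_nat_add_iff' 1, Real.log_div (by linarith) (by linarith)]
  convert! h using 1
  · funext n
    rw [artanhCoeff, neg_pow z, Nat.cast_add_one]
    field_simp
  · simp only [range_one, sum_singleton, artanhCoeff, sub_neg_eq_add, pow_zero, sub_self,
      zero_div, zero_mul]
    ring

theorem sum_artanhCoeff (n : ℕ) : ∑ k ∈ range (n + 1), artanhCoeff k = (H n - Halt n) / 2 := by
  rw [← sum_Icc_eq_sum_range (a := 1) (by simp [artanhCoeff]), H, Halt, ← sum_sub_distrib, sum_div]
  refine sum_congr rfl fun k _ ↦ ?_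
  rw [artanhCoeff, ← sub_div, div_div, mul_comm]

/-- The expected partitioning costs of "Count" for `n ≥ 2`, in closed form. -/
noncomputable def countCost (n : ℕ) : ℝ :=
  3 / 2 * (n + 1) + (H n - Halt n) / 4 - 31 / 8 - 3 / 8 * artanhCoeff n
    - 1 / 8 * artanhCoeff (n - 1)

-- The corrections at `0` and `1` are `31 / 8 - 3 / 2` and `31 / 8 - 25 / 8`, since
-- `z ^ 2 / (1 - z) = (1 - z)⁻¹ - 1 - z`.
theorem hasSum_countCost {z : ℝ} (hz : |z| < 1) :
    HasSum (fun n ↦ (countCost n + if n = 0 then 19 / 8 else if n = 1 then 3 / 4 else 0) * z ^ n)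
      (countGF z) := by
  have hz₁ : 1 - z ≠ 0 := by linarith [(abs_lt.1 hz).2]
  have geom : HasSum (fun n ↦ (1 : ℝ) * z ^ n) (1 - z)⁻¹ := by
    simpa using hasSum_geometric_of_abs_lt_one hz
  have artanh := hasSum_artanhCoeff hz
  have low := hasSum_sum_of_ne_finset_zero (L := .unconditional ℕ) (s := range 2)
    (f := fun n ↦ (if n = 0 then 19 / 8 else if n = 1 then 3 / 4 else (0 : ℝ)) * z ^ n)
    (fun n hn ↦ by rw [if_neg (by grind), if_neg (by grind), zero_mul])
  have series := ((((((hasSum_sum_range_mul_pow geom hz).mul_left (3 / 2)).add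
    ((hasSum_sum_range_mul_pow artanh hz).mul_left (1 / 2))).sub (geom.mul_left (31 / 8))).sub
    (artanh.mul_left (3 / 8))).sub
    ((hasSum_shift_mul_pow artanh (by simp [artanhCoeff])).mul_left (1 / 8))).add low
  convert! series using 1
  · funext n
    rw [sum_artanhCoeff, sum_const, card_range, nsmul_one, countCost, Nat.cast_add_one]
    ring
  · simp only [countGF, sum_range_succ, sum_range_zero]
    simp only [one_div, ↓reduceIte, pow_zero, mul_one, zero_add, one_ne_zero, pow_one]
    field_simp
    ring

theorem eq_countCost_of_hasSum {P : ℕ → ℝ}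
    (hP : ∀ z : ℝ, |z| < 1 → HasSum (fun n ↦ P n * z ^ n) (countGF z)) {n : ℕ} (hn : 2 ≤ n) :
    P n = countCost n := by
  have unit_ball : ∀ᶠ z : ℝ in 𝓝 0, |z| < 1 :=
    (Metric.eventually_nhds_iff_ball.2 ⟨1, one_pos, fun _ hz ↦ by simpa using hz⟩)
  rw [eq_of_eventually_hasSum_mul_pow (unit_ball.mono hP)
    (unit_ball.mono fun _ ↦ hasSum_countCost)]
  grind

/-! ### The recurrence for the costs -/

theorem qsCost_eq_zero (P : ℕ → ℝ) {n : ℕ} {j : ℤ} (h : n ≤ 1 ∨ j < 1 ∨ (n : ℤ) < j) :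
    qsCost P n j = 0 := by
  rw [qsCost, if_pos h]

theorem qsCost_eq_add_sum (P : ℕ → ℝ) {n : ℕ} {j : ℤ} (hn : 2 ≤ n) (hj : 1 ≤ j) (hjn : j ≤ n) :
    qsCost P n j = P n + 2 / ((n : ℝ) * ((n : ℝ) - 1)) *
      ((∑ s ∈ Icc j.toNat (n - 2), ((n : ℝ) - 1 - s) * qsCost P s j) +
       (∑ m ∈ Icc 1 (n - 2), ∑ s ∈ Icc (max 0 (j - (m : ℤ) - 1)) (min (j - 2) ((n : ℤ) - m - 2)),
          qsCost P m (j - s - 1)) +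
       (∑ l ∈ Icc ((n : ℤ) - j + 1).toNat (n - 2),
          ((n : ℝ) - 1 - l) * qsCost P l ((n : ℤ) - j + 1))) := by
  rw [qsCost, if_neg (by omega)]
  congr 3
  · congr 1
    · exact sum_attach _ fun s ↦ ((n : ℝ) - 1 - s) * qsCost P s j
    · exact sum_attach _ fun m : ℕ ↦ ∑ s ∈ Icc (max 0 (j - (m : ℤ) - 1))
        (min (j - 2) ((n : ℤ) - m - 2)), qsCost P m (j - s - 1)
  · exact sum_attach _ fun l ↦ ((n : ℝ) - 1 - l) * qsCost P l ((n : ℤ) - j + 1)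

theorem qsCost_reflect (P : ℕ → ℝ) (n : ℕ) (j : ℤ) : qsCost P n (n + 1 - j) = qsCost P n j := by
  induction n using Nat.strong_induction_on generalizing j with
  | h n ih =>
    by_cases h : n ≤ 1 ∨ j < 1 ∨ (n : ℤ) < j
    · rw [qsCost_eq_zero P h, qsCost_eq_zero P (by omega)]
    have middle_sum : ∀ m ∈ Icc 1 (n - 2),
        ∑ s ∈ Icc (max 0 ((n : ℤ) + 1 - j - m - 1)) (min ((n : ℤ) + 1 - j - 2) ((n : ℤ) - m - 2)),
          qsCost P m ((n : ℤ) + 1 - j - s - 1)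
        = ∑ s ∈ Icc (max 0 (j - (m : ℤ) - 1)) (min (j - 2) ((n : ℤ) - m - 2)),
          qsCost P m (j - s - 1) := by
      intro m hm
      refine sum_nbij' ((n : ℤ) - m - 2 - ·) ((n : ℤ) - m - 2 - ·) ?_ ?_ ?_ ?_ fun s _ ↦ ?_
      iterate 4 simp only [mem_Icc]; omega
      rw [← ih m (by grind)]
      congr 1
      ring
    rw [qsCost_eq_add_sum P (by omega) (by omega) (by omega),
      qsCost_eq_add_sum P (by omega) (by omega) (by omega), sum_congr rfl middle_sum,
      show (n : ℤ) - (n + 1 - j) + 1 = j by ring, show (n : ℤ) + 1 - j = n - j + 1 by ring]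
    ring

theorem choose_two_mul_qsCost_sub (P : ℕ → ℝ) {n : ℕ} {j : ℤ} (hn : 2 ≤ n) (hj : 1 ≤ j)
    (hjn : j ≤ n) :
    (n.choose 2 : ℝ) * (qsCost P n j - P n) =
      (∑ s ∈ Icc j.toNat (n - 2), ((n : ℝ) - 1 - s) * qsCost P s j) +
       (∑ m ∈ Icc 1 (n - 2), ∑ s ∈ Icc (max 0 (j - (m : ℤ) - 1)) (min (j - 2) ((n : ℤ) - m - 2)),
          qsCost P m (j - s - 1)) +
       (∑ l ∈ Icc ((n : ℤ) - j + 1).toNat (n - 2),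
          ((n : ℝ) - 1 - l) * qsCost P l ((n : ℤ) - j + 1)) := by
  have hn' : (2 : ℝ) ≤ n := by exact_mod_cast hn
  have : (n : ℝ) - 1 ≠ 0 := by linarith
  rw [qsCost_eq_add_sum P hn hj hjn, add_sub_cancel_left, Nat.cast_choose_two]
  field_simp

theorem choose_two_mul_qsCost_one_sub (P : ℕ → ℝ) (n : ℕ) :
    (n.choose 2 : ℝ) * (qsCost P n 1 - P n)
      = ∑ s ∈ range (n - 1), ((n : ℝ) - 1 - s) * qsCost P s 1 := by
  obtain hn | hn := Nat.lt_or_ge n 2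
  · interval_cases n <;> simp
  have middle_sum : ∀ m ∈ Icc 1 (n - 2),
      ∑ s ∈ Icc (max 0 ((1 : ℤ) - m - 1)) (min (1 - 2) ((n : ℤ) - m - 2)),
        qsCost P m (1 - s - 1) = 0 := by
    intro m _
    rw [Icc_eq_empty (by omega), sum_empty]
  have last_sum : Icc ((n : ℤ) - 1 + 1).toNat (n - 2) = ∅ := Icc_eq_empty (by omega)
  rw [choose_two_mul_qsCost_sub P hn le_rfl (by omega), sum_eq_zero middle_sum, last_sum,
    sum_empty, add_zero, add_zero,
    sum_Icc_eq_sum_range (fun s _ ↦ by rw [qsCost_eq_zero P (by omega), mul_zero]),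
    show n - 2 + 1 = n - 1 by omega]

theorem choose_two_mul_qsCost_two_sub (P : ℕ → ℝ) (n : ℕ) :
    (n.choose 2 : ℝ) * (qsCost P n 2 - P n)
      = ∑ s ∈ range (n - 1), ((n : ℝ) - 1 - s) * qsCost P s 2
        + ∑ s ∈ range (n - 1), qsCost P s 1 := by
  obtain hn | hn := Nat.lt_or_ge n 2
  · interval_cases n <;> simp
  have middle_sum : ∀ m ∈ Icc 1 (n - 2),
      ∑ s ∈ Icc (max 0 ((2 : ℤ) - m - 1)) (min (2 - 2) ((n : ℤ) - m - 2)),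
        qsCost P m (2 - s - 1) = qsCost P m 1 := by
    intro m hm
    rw [mem_Icc] at hm
    rw [show max 0 ((2 : ℤ) - m - 1) = 0 by omega, show min (2 - 2) ((n : ℤ) - m - 2) = 0 by omega,
      Icc_self, sum_singleton]
    norm_num
  have last_sum : Icc ((n : ℤ) - 2 + 1).toNat (n - 2) = ∅ := Icc_eq_empty (by omega)
  rw [choose_two_mul_qsCost_sub P hn one_le_two (by omega), sum_congr rfl middle_sum, last_sum,
    sum_empty, add_zero,
    sum_Icc_eq_sum_range (fun s _ ↦ by rw [qsCost_eq_zero P (by omega), mul_zero]),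
    sum_Icc_eq_sum_range (fun s _ ↦ by rw [qsCost_eq_zero P (by omega)]),
    show n - 2 + 1 = n - 1 by omega]

theorem qsCost_two_one (P : ℕ → ℝ) : qsCost P 2 1 = P 2 := by
  have h := choose_two_mul_qsCost_one_sub P 2
  norm_num [sum_range_succ, Nat.choose, qsCost_eq_zero] at h
  linarith

theorem qsCost_two_two (P : ℕ → ℝ) : qsCost P 2 2 = P 2 :=
  (qsCost_reflect P 2 1).trans (qsCost_two_one P)

theorem qsCost_three_one (P : ℕ → ℝ) : qsCost P 3 1 = P 3 := by
  have h := choose_two_mul_qsCost_one_sub P 3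
  norm_num [sum_range_succ, Nat.choose, qsCost_eq_zero] at h
  linarith

theorem qsCost_three_two (P : ℕ → ℝ) : qsCost P 3 2 = P 3 := by
  have h := choose_two_mul_qsCost_two_sub P 3
  norm_num [sum_range_succ, Nat.choose, qsCost_eq_zero] at h
  linarith

theorem qsCost_four_one (P : ℕ → ℝ) : qsCost P 4 1 = P 4 + P 2 / 6 := by
  have h := choose_two_mul_qsCost_one_sub P 4
  norm_num [sum_range_succ, Nat.choose, qsCost_eq_zero, qsCost_two_one] at h
  linarith

theorem qsCost_four_two (P : ℕ → ℝ) : qsCost P 4 2 = P 4 + P 2 / 3 := by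
  have h := choose_two_mul_qsCost_two_sub P 4
  norm_num [sum_range_succ, Nat.choose, qsCost_eq_zero, qsCost_two_one, qsCost_two_two] at h
  linarith

theorem qsCost_five_two (P : ℕ → ℝ) :
    qsCost P 5 2 = P 5 + (3 * P 2 + 2 * P 3) / 10 := by
  have h := choose_two_mul_qsCost_two_sub P 5
  norm_num [sum_range_succ, Nat.choose, qsCost_eq_zero, qsCost_two_one, qsCost_two_two,
    qsCost_three_one, qsCost_three_two] at h
  linarith

/-- The second difference `Δ²(n(n-1)/2 · X n)`, under which the weighted sums of the quickselect
recurrence collapse. -/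
noncomputable def binomSecondDiff (X : ℕ → ℝ) (n : ℕ) : ℝ :=
  (n + 2).choose 2 * X (n + 2) - 2 * ((n + 1).choose 2 * X (n + 1)) + n.choose 2 * X n

theorem binomSecondDiff_congr {X Y : ℕ → ℝ} {N n : ℕ} (h : ∀ m ≥ N, X m = Y m) (hn : N ≤ n) :
    binomSecondDiff X n = binomSecondDiff Y n := by
  rw [binomSecondDiff, binomSecondDiff, h (n + 2) (by omega), h (n + 1) (by omega), h n hn]

theorem binomSecondDiff_succ_of_sum_recurrence {P X Y : ℕ → ℝ}
    (h : ∀ n : ℕ, (n.choose 2 : ℝ) * (X n - P n)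
      = ∑ s ∈ range (n - 1), ((n : ℝ) - 1 - s) * X s + ∑ s ∈ range (n - 1), Y s) (n : ℕ) :
    binomSecondDiff X (n + 1) = binomSecondDiff P (n + 1) + X (n + 1) + Y (n + 1) - Y n := by
  have weighted_sum (c : ℝ) (m : ℕ) : ∑ s ∈ range m, (c - s) * X s
      = c * ∑ s ∈ range m, X s - ∑ s ∈ range m, s * X s := by
    rw [mul_sum, ← sum_sub_distrib]
    exact sum_congr rfl fun _ _ ↦ sub_mul _ _ _
  have h₁ := h (n + 1)
  have h₂ := h (n + 2)
  have h₃ := h (n + 3)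
  simp only [weighted_sum, Nat.add_sub_cancel, Nat.add_succ_sub_one, sum_range_succ] at h₁ h₂ h₃
  simp only [binomSecondDiff, add_assoc, Nat.reduceAdd]
  push_cast at h₁ h₂ h₃
  linear_combination h₃ - 2 * h₂ + h₁

theorem eq_of_binomSecondDiff_sub_eq {X Y : ℕ → ℝ} {N : ℕ}
    (h : ∀ n ≥ N, binomSecondDiff X n - X n = binomSecondDiff Y n - Y n)
    (h₀ : X N = Y N) (h₁ : X (N + 1) = Y (N + 1)) {n : ℕ} (hn : N ≤ n) : X n = Y n := by
  suffices X n = Y n ∧ X (n + 1) = Y (n + 1) from this.1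
  induction n, hn using Nat.le_induction with
  | base => exact ⟨h₀, h₁⟩
  | succ n hn ih =>
    refine ⟨ih.2, ?_⟩
    have hX := h n hn
    simp only [binomSecondDiff, ih.1, ih.2] at hX
    have : ((n + 2).choose 2 : ℝ) ≠ 0 := by exact_mod_cast (Nat.choose_pos (by omega)).ne'
    exact mul_left_cancel₀ this (by linarith)

/-! ### Closed forms -/

theorem ite_even_eq_mul {K : Type*} [Field K] [CharZero K] (n : ℕ) (x : K) :
    (if Even n then x else 0) = (1 + (-1) ^ n) / 2 * x := by
  split_ifs with h
  · rw [h.neg_one_pow]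
    ring
  · rw [(Nat.not_even_iff_odd.1 h).neg_one_pow]
    ring

theorem ite_odd_eq_mul {K : Type*} [Field K] [CharZero K] (n : ℕ) (x : K) :
    (if Odd n then x else 0) = (1 - (-1) ^ n) / 2 * x := by
  split_ifs with h
  · rw [h.neg_one_pow]
    ring
  · rw [(Nat.not_odd_iff_even.1 h).neg_one_pow]
    ring

/-- The expected cost of selecting the smallest of `n ≥ 3` elements with "Count", in closed form. -/
noncomputable def smallestCost (n : ℕ) : ℝ :=
  9 / 4 * (n : ℝ)
  + 1 / 12 * harmonicConv n
  - 1 / 6 * alternatingDoubleSum n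
  - 43 / 18 * H n
  + 1 / 18 * Halt n
  + 5 / 108
  - (if Even n then 1 / (36 * ((n : ℝ) - 1)) else 0)
  + (if Odd n then 1 / (72 * ((n : ℝ) - 2)) else 0)
  + (if Odd n then 1 / (72 * (n : ℝ)) else 0)

/-- The expected cost of selecting the second smallest of `n ≥ 4` elements with "Count", in closed
form. -/
noncomputable def secondSmallestCost (n : ℕ) : ℝ :=
  9 / 4 * (n : ℝ)
  + 1 / 12 * harmonicConv n
  - 1 / 6 * alternatingDoubleSum n
  - 8 / 9 * H n
  - 1 / 9 * Halt n
  - 755 / 216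
  - 1 / 12 * ∑ k ∈ Icc 1 (n - 1), 1 / ((k : ℝ) * ((n : ℝ) - (k : ℝ)))
  + 1 / 6 * Halt (n - 1) / (n : ℝ)
  - (if Even n then 1 / (144 * ((n : ℝ) - 3)) else 0)
  - (if Odd n then 1 / (144 * ((n : ℝ) - 2)) else 0)
  + (if Even n then 5 / (144 * ((n : ℝ) - 1)) else 0)
  + (if Even n then 7 / (3 * (n : ℝ)) else 0)
  + (if Odd n then 325 / (144 * (n : ℝ)) else 0)

theorem binomSecondDiff_smallestCost {n : ℕ} (hn : 2 ≤ n) :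
    binomSecondDiff smallestCost (n + 1)
      = binomSecondDiff countCost (n + 1) + smallestCost (n + 1) := by
  have hn' : (2 : ℝ) ≤ n := by exact_mod_cast hn
  have : (n : ℝ) - 1 ≠ 0 := by linarith
  simp only [binomSecondDiff, smallestCost, countCost, artanhCoeff, Nat.cast_choose_two,
    harmonicConv_succ, alternatingDoubleSum_succ, H_succ, Halt_succ,
    ite_even_eq_mul, ite_odd_eq_mul, Nat.add_sub_cancel, Nat.add_succ_sub_one, pow_succ]
  push_cast
  rw [show (n : ℝ) + 1 + 2 - 1 = n + 2 by ring, show (n : ℝ) + 1 + 2 - 2 = n + 1 by ring,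
    show (n : ℝ) + 1 + 1 - 1 = n + 1 by ring, show (n : ℝ) + 1 + 1 - 2 = n by ring,
    show (n : ℝ) + 1 - 1 = n by ring, show (n : ℝ) + 1 - 2 = n - 1 by ring]
  field_simp
  ring

theorem binomSecondDiff_secondSmallestCost {n : ℕ} (hn : 3 ≤ n) :
    binomSecondDiff secondSmallestCost (n + 1)
      = binomSecondDiff countCost (n + 1) + secondSmallestCost (n + 1)
        + smallestCost (n + 1) - smallestCost n := by
  have hn' : (3 : ℝ) ≤ n := by exact_mod_cast hn
  have : (n : ℝ) - 1 ≠ 0 := by linarith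
  have : (n : ℝ) - 2 ≠ 0 := by linarith
  -- The sums have to be evaluated before `n + 1 - 1` in their ranges gets simplified.
  simp only [binomSecondDiff, secondSmallestCost, sum_one_div_mul_sub]
  simp only [smallestCost, countCost, artanhCoeff, Nat.cast_choose_two, harmonicConv_succ,
    alternatingDoubleSum_succ, H_succ, Halt_succ,
    ite_even_eq_mul, ite_odd_eq_mul, Nat.add_sub_cancel, Nat.add_succ_sub_one, pow_succ]
  push_cast
  rw [show (n : ℝ) + 1 + 2 - 1 = n + 2 by ring, show (n : ℝ) + 1 + 2 - 2 = n + 1 by ring,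
    show (n : ℝ) + 1 + 2 - 3 = n by ring, show (n : ℝ) + 1 + 1 - 1 = n + 1 by ring,
    show (n : ℝ) + 1 + 1 - 2 = n by ring, show (n : ℝ) + 1 + 1 - 3 = n - 1 by ring,
    show (n : ℝ) + 1 - 1 = n by ring, show (n : ℝ) + 1 - 2 = n - 1 by ring,
    show (n : ℝ) + 1 - 3 = n - 2 by ring]
  field_simp
  ring

theorem smallestCost_three : smallestCost 3 = countCost 3 := by
  norm_num [smallestCost, harmonicConv, alternatingDoubleSum, countCost, artanhCoeff, H, Halt,
    sum_Icc_succ_top, Nat.even_iff, Nat.odd_iff]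

theorem smallestCost_four : smallestCost 4 = countCost 4 + countCost 2 / 6 := by
  norm_num [smallestCost, harmonicConv, alternatingDoubleSum, countCost, artanhCoeff, H, Halt,
    sum_Icc_succ_top, Nat.even_iff, Nat.odd_iff]

theorem secondSmallestCost_four : secondSmallestCost 4 = countCost 4 + countCost 2 / 3 := by
  norm_num [secondSmallestCost, harmonicConv, alternatingDoubleSum, countCost, artanhCoeff, H, Halt,
    sum_Icc_succ_top, Nat.even_iff, Nat.odd_iff]

theorem secondSmallestCost_five :
    secondSmallestCost 5 = countCost 5 + (3 * countCost 2 + 2 * countCost 3) / 10 := by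
  norm_num [secondSmallestCost, harmonicConv, alternatingDoubleSum, countCost, artanhCoeff, H, Halt,
    sum_Icc_succ_top, Nat.even_iff, Nat.odd_iff]

theorem qsCost_one_eq_smallestCost {P : ℕ → ℝ} (hP : ∀ n ≥ 2, P n = countCost n) {n : ℕ}
    (hn : 3 ≤ n) : qsCost P n 1 = smallestCost n := by
  refine eq_of_binomSecondDiff_sub_eq (X := fun n ↦ qsCost P n 1) (fun n hn ↦ ?_) ?_ ?_ hn
  · obtain ⟨n, rfl⟩ := Nat.exists_eq_add_of_le' (show 1 ≤ n by omega)
    rw [binomSecondDiff_succ_of_sum_recurrence (Y := 0)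
        (by simpa using choose_two_mul_qsCost_one_sub P),
      binomSecondDiff_smallestCost (by omega), binomSecondDiff_congr hP (by omega)]
    simp
  · simp only [qsCost_three_one, hP 3 (by omega), smallestCost_three]
  · simp only [Nat.reduceAdd, qsCost_four_one, hP 4 (by omega), hP 2 le_rfl, smallestCost_four]

theorem qsCost_two_eq_secondSmallestCost {P : ℕ → ℝ} (hP : ∀ n ≥ 2, P n = countCost n) {n : ℕ}
    (hn : 4 ≤ n) : qsCost P n 2 = secondSmallestCost n := by
  refine eq_of_binomSecondDiff_sub_eq (X := fun n ↦ qsCost P n 2) (fun n hn ↦ ?_) ?_ ?_ hn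
  · obtain ⟨n, rfl⟩ := Nat.exists_eq_add_of_le' (show 1 ≤ n by omega)
    rw [binomSecondDiff_succ_of_sum_recurrence (choose_two_mul_qsCost_two_sub P),
      binomSecondDiff_secondSmallestCost (by omega), binomSecondDiff_congr hP (by omega),
      qsCost_one_eq_smallestCost hP (by omega), qsCost_one_eq_smallestCost hP (by omega)]
    ring
  · simp only [qsCost_four_two, hP 4 (by omega), hP 2 le_rfl, secondSmallestCost_four]
  · simp only [Nat.reduceAdd, qsCost_five_two, hP 5 (by omega), hP 3 (by omega), hP 2 le_rfl,
      secondSmallestCost_five]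

/-- Exact cost of selecting the second smallest (equivalently,
second largest) element with the strategy "Count", for all `n ≥ 4`. -/
theorem count_second_smallest_exact (Pct : ℕ → ℝ)
    (hPct : ∀ z : ℝ, |z| < 1 → HasSum (fun n : ℕ => Pct n * z ^ n) (countGF z))
    (n : ℕ) (hn : 4 ≤ n) :
    qsCost Pct n 2 = qsCost Pct n ((n : ℤ) - 1) ∧
    qsCost Pct n 2 =
      9 / 4 * (n : ℝ)
      + 1 / 12 * ∑ k ∈ Finset.Icc 1 (n - 1), H k / ((n : ℝ) - (k : ℝ))
      - 1 / 6 * ∑ k ∈ Finset.Icc 2 n, Halt (k - 1) / (k : ℝ)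
      - 8 / 9 * H n
      - 1 / 9 * Halt n
      - 755 / 216
      - 1 / 12 * ∑ k ∈ Finset.Icc 1 (n - 1), 1 / ((k : ℝ) * ((n : ℝ) - (k : ℝ)))
      + 1 / 6 * Halt (n - 1) / (n : ℝ)
      - (if Even n then 1 / (144 * ((n : ℝ) - 3)) else 0)
      - (if Odd n then 1 / (144 * ((n : ℝ) - 2)) else 0)
      + (if Even n then 5 / (144 * ((n : ℝ) - 1)) else 0)
      + (if Even n then 7 / (3 * (n : ℝ)) else 0)
      + (if Odd n then 325 / (144 * (n : ℝ)) else 0) := by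
  have hP : ∀ m ≥ 2, Pct m = countCost m := fun m hm ↦ eq_countCost_of_hasSum hPct hm
  refine ⟨?_, qsCost_two_eq_secondSmallestCost hP hn⟩
  rw [← qsCost_reflect, show (n : ℤ) + 1 - 2 = n - 1 by ring]
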